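/- Let D be an ADF and define the sequence of interpretations v_0 = v_u and v_{i+1} = Γ_D(v_i). Then for every i ∈ ℕ, the interpretation v_i is a strongly admissible interpretation of D. -/

import Mathlib

/-!
The iterates `v_i` increase in the information order, because `Γ_D` is monotone and `v_0` is
trivial. Thus each argument decided in `v_n` has a first stage `k + 1 ≤ n` at which it is decided.
An argument decided at stage `k + 1` is justified by those of its parents that are already
decided at stage `k`; each of these entered at a strictly earlier stage, so a recursion on the
stage never returns to an argument met before. `sjrel_of_stage` carries this out, under the
invariant that every excluded argument is undecided at stage `k`.
Cutting `v_k` down to the parents of `a` does not change the status of `φ_a`, since a Boolean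
function on finitely many arguments is determined by its values on the ones it depends on
(`ADF.C_congr`).
-/

/-- Three truth values: true, false, undecided. -/
inductive TV : Type
  | t | f | u
deriving DecidableEq, Repr

/-- The information order on truth values: u <_i t and u <_i f. -/
def TV.ile (x y : TV) : Prop := x = TV.u ∨ x = y

/-- The information order on interpretations, extended pointwise. -/
def ILE {A : Type*} (v w : A → TV) : Prop := ∀ a, TV.ile (v a) (w a)

/-- An abstract dialectical framework on a set of arguments `A`:
each argument `a` has an acceptance condition `C a : (A → Bool) → Bool`. -/
structure ADF (A : Type*) where
  C : A → (A → Bool) → Bool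

/-- The trivial interpretation mapping every argument to undecided. -/
def trivialInterp (A : Type*) : A → TV := fun _ => TV.u

/-- The parents of `a` are the arguments on which its acceptance condition depends. -/
def ADF.parents {A : Type*} [DecidableEq A] (D : ADF A) (a : A) : Set A :=
  {b | ∃ w : A → Bool, D.C a w ≠ D.C a (Function.update w b (!w b))}

/-- A two-valued assignment `w` completes a three-valued interpretation `v`. -/
def Completes {A : Type*} (w : A → Bool) (v : A → TV) : Prop :=
  ∀ b, (v b = TV.t → w b = true) ∧ (v b = TV.f → w b = false)

/-- `φ` is irrefutable under `v`: every completion of `v` makes `φ` true. -/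
def Irrefutable {A : Type*} (φ : (A → Bool) → Bool) (v : A → TV) : Prop :=
  ∀ w : A → Bool, Completes w v → φ w = true

/-- `φ` is unsatisfiable under `v`: every completion of `v` makes `φ` false. -/
def Unsat {A : Type*} (φ : (A → Bool) → Bool) (v : A → TV) : Prop :=
  ∀ w : A → Bool, Completes w v → φ w = false

open Classical in
/-- The characteristic operator Γ_D of an ADF. -/
noncomputable def Gamma {A : Type*} (D : ADF A) (v : A → TV) : A → TV := fun a =>
  if Irrefutable (D.C a) v then TV.t
  else if Unsat (D.C a) v then TV.f
  else TV.u

open Classical in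
/-- `v|_P`: agrees with `v` on `P` and is undecided elsewhere. -/
noncomputable def restrictTV {A : Type*} (v : A → TV) (P : Set A) : A → TV :=
  fun b => if b ∈ P then v b else TV.u

/-- Strong acceptability/deniability of an argument with respect to interpretation `v`
and set `S`, relative to an excluded set `E` (the first index). An argument `a` with
`v a = t` (resp. `v a = f`) is strongly acceptable (resp. strongly deniable) iff there is
`P ⊆ (parents a ∩ S) \ E` with `φ_a^{v|_P}` irrefutable (resp. unsatisfiable) and every
`p ∈ P` strongly acceptable/deniable relative to `E ∪ {p}`. -/
inductive SJrel {A : Type*} [DecidableEq A] (D : ADF A) (v : A → TV) (S : Set A) :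
    Set A → A → Prop
  | acc (E : Set A) (a : A) (P : Set A)
      (ha : v a = TV.t)
      (hP : P ⊆ (D.parents a ∩ S) \ E)
      (hirr : Irrefutable (D.C a) (restrictTV v P))
      (hrec : ∀ p ∈ P, SJrel D v S (E ∪ {p}) p) : SJrel D v S E a
  | den (E : Set A) (a : A) (P : Set A)
      (ha : v a = TV.f)
      (hP : P ⊆ (D.parents a ∩ S) \ E)
      (hunsat : Unsat (D.C a) (restrictTV v P))
      (hrec : ∀ p ∈ P, SJrel D v S (E ∪ {p}) p) : SJrel D v S E a

/-- `a` is strongly acceptable/deniable w.r.t. `v` and `S`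
(i.e., relative to the excluded set `{a}`). -/
def StronglyJustified {A : Type*} [DecidableEq A] (D : ADF A) (v : A → TV)
    (S : Set A) (a : A) : Prop :=
  SJrel D v S {a} a

/-- `S` is a least set for `a` with respect to `v`. -/
def LeastSet {A : Type*} [DecidableEq A] (D : ADF A) (v : A → TV)
    (a : A) (S : Set A) : Prop :=
  StronglyJustified D v S a ∧
  ∀ S' : Set A, S'.ncard < S.ncard → ¬ StronglyJustified D v S' a

/-- An interpretation is strongly admissible iff every argument assigned `t`/`f`
is strongly acceptable/deniable w.r.t. `v` and some set `S`. -/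
def StronglyAdmissible {A : Type*} [DecidableEq A] (D : ADF A) (v : A → TV) : Prop :=
  ∀ a : A, v a ≠ TV.u → ∃ S : Set A, StronglyJustified D v S a

/-- `g` is the grounded interpretation of `D`: the least fixed point of `Γ_D`. -/
def IsGrounded {A : Type*} (D : ADF A) (g : A → TV) : Prop :=
  Gamma D g = g ∧ ∀ w : A → TV, Gamma D w = w → ILE g w

/-- An interpretation is admissible iff `v ≤_i Γ_D(v)`. -/
def Admissible {A : Type*} (D : ADF A) (v : A → TV) : Prop :=
  ILE v (Gamma D v)

/-- An interpretation is conflict-free. -/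
def ConflictFree {A : Type*} (D : ADF A) (v : A → TV) : Prop :=
  ∀ a : A, (v a = TV.t → ∃ w : A → Bool, Completes w v ∧ D.C a w = true) ∧
           (v a = TV.f → Unsat (D.C a) v)

/-- The join of two interpretations: take `v`'s value where defined, else `w`'s. -/
def joinI {A : Type*} (v w : A → TV) : A → TV :=
  fun a => if v a = TV.u then w a else v a

/-- The acceptance condition of `a` only sees the parents of `a`. Finiteness of `A` lets the
non-parents be changed one at a time. -/
lemma ADF.C_congr {A : Type*} [Fintype A] [DecidableEq A] (D : ADF A) (a : A)
    (w w' : A → Bool) (h : ∀ b ∈ D.parents a, w b = w' b) : D.C a w = D.C a w' := by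
  have key : ∀ s : Finset A, D.C a (s.piecewise w' w) = D.C a w := by
    intro s
    induction s using Finset.induction_on with
    | empty => simp
    | insert b s hb ih =>
      rw [Finset.piecewise_insert, ← ih]
      by_cases hw : w b = w' b
      · congr 1
        ext c
        by_cases hc : c = b
        · subst hc
          simp [hb, hw]
        · simp [hc]
      · have hnp : b ∉ D.parents a := fun hp => hw (h b hp)
        have hall : ∀ x : A → Bool, D.C a x = D.C a (Function.update x b (!x b)) := by
          simpa [ADF.parents] using hnp
        have hval : w' b = !(s.piecewise w' w) b := by
          simp only [Finset.piecewise_eq_of_notMem s w' w hb]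
          revert hw
          cases w b <;> cases w' b <;> simp
        rw [hval]
        exact (hall _).symm
  simpa using (key Finset.univ).symm

lemma exists_completes {A : Type*} (v : A → TV) : ∃ w : A → Bool, Completes w v :=
  ⟨fun b => decide (v b = TV.t), fun b => by cases h : v b <;> simp [h]⟩

lemma Completes.of_ile {A : Type*} {v v' : A → TV} (h : ILE v v') {w : A → Bool}
    (hw : Completes w v') : Completes w v := by
  intro b
  rcases h b with hb | hb
  · simp [hb]
  · rw [hb]
    exact hw b

lemma irrefutable_of_gamma {A : Type*} {D : ADF A} {v : A → TV} {a : A}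
    (h : Gamma D v a = TV.t) : Irrefutable (D.C a) v := by
  unfold Gamma at h
  split_ifs at h
  assumption

lemma unsat_of_gamma {A : Type*} {D : ADF A} {v : A → TV} {a : A}
    (h : Gamma D v a = TV.f) : Unsat (D.C a) v := by
  unfold Gamma at h
  split_ifs at h
  assumption

lemma gamma_mono {A : Type*} (D : ADF A) {v v' : A → TV} (h : ILE v v') :
    ILE (Gamma D v) (Gamma D v') := by
  intro a
  cases hv : Gamma D v a with
  | u => exact Or.inl rfl
  | t =>
    right
    have hi : Irrefutable (D.C a) v' := fun w hw => irrefutable_of_gamma hv w (hw.of_ile h)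
    simp [Gamma, hi]
  | f =>
    right
    have hu : Unsat (D.C a) v' := fun w hw => unsat_of_gamma hv w (hw.of_ile h)
    have hi : ¬ Irrefutable (D.C a) v' := by
      intro hi
      obtain ⟨w, hw⟩ := exists_completes v'
      have h1 := hi w hw
      rw [hu w hw] at h1
      cases h1
    simp [Gamma, hu, hi]

lemma ILE.trans {A : Type*} {v v' v'' : A → TV} (h : ILE v v') (h' : ILE v' v'') :
    ILE v v'' := by
  intro a
  rcases h a with ha | ha
  · exact Or.inl ha
  · rw [ha]
    exact h' a

lemma ILE.eq_u {A : Type*} {v v' : A → TV} (h : ILE v v') {a : A} (ha : v' a = TV.u) :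
    v a = TV.u := by
  rcases h a with h1 | h1
  · exact h1
  · rw [h1, ha]

lemma ILE.eq_of_ne {A : Type*} {v v' : A → TV} (h : ILE v v') {a : A} (ha : v a ≠ TV.u) :
    v' a = v a :=
  ((h a).resolve_left ha).symm

lemma iterates_mono {A : Type*} (D : ADF A) (vseq : ℕ → A → TV)
    (h0 : vseq 0 = trivialInterp A) (hstep : ∀ i : ℕ, vseq (i + 1) = Gamma D (vseq i))
    {i j : ℕ} (hij : i ≤ j) : ILE (vseq i) (vseq j) := by
  have hsucc : ∀ k, ILE (vseq k) (vseq (k + 1)) := by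
    intro k
    induction k with
    | zero =>
      intro a
      left
      rw [h0]
      rfl
    | succ k ih =>
      have := gamma_mono D ih
      rwa [← hstep, ← hstep] at this
  induction j, hij using Nat.le_induction with
  | base => exact fun a => Or.inr rfl
  | succ j _ ih => exact ih.trans (hsucc j)

/-- If `v` forces the value `c` on the acceptance condition of `a`, then so does any
`v' ≥_i v` restricted to the parents of `a` that are decided in `v`. The cases `c = true` and
`c = false` concern irrefutability and unsatisfiability. -/
lemma forced_restrict {A : Type*} [Fintype A] [DecidableEq A] (D : ADF A) (a : A)
    {v v' : A → TV} (h : ILE v v') (c : Bool)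
    (hc : ∀ w : A → Bool, Completes w v → D.C a w = c) (w : A → Bool)
    (hw : Completes w (restrictTV v' {b | b ∈ D.parents a ∧ v b ≠ TV.u})) :
    D.C a w = c := by
  classical
  obtain ⟨w₀, hw₀⟩ := exists_completes v
  -- On the parents keep `w`; elsewhere switch to a completion of `v`.
  rw [D.C_congr a w (fun b => if b ∈ D.parents a then w b else w₀ b)
    (fun b hb => by simp [hb])]
  apply hc
  intro b
  by_cases hb : b ∈ D.parents a
  · by_cases hu : v b = TV.u
    · simp [hu]
    · have := hw b
      simpa [restrictTV, hb, hu, h.eq_of_ne hu] using this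
  · simpa [hb] using hw₀ b

/-- An argument decided at stage `k` switches from undecided to decided at some stage
`m + 1 ≤ k`, as stage `0` decides nothing. -/
lemma exists_first_stage {A : Type*} (vseq : ℕ → A → TV) (h0 : vseq 0 = trivialInterp A)
    {k : ℕ} {p : A} (hp : vseq k p ≠ TV.u) :
    ∃ m < k, vseq (m + 1) p ≠ TV.u ∧ vseq m p = TV.u := by
  induction k with
  | zero => exact absurd (by rw [h0]; rfl) hp
  | succ k ih =>
    by_cases hk : vseq k p = TV.u
    · exact ⟨k, Nat.lt_succ_self k, hp, hk⟩
    · obtain ⟨m, hm, h⟩ := ih hk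
      exact ⟨m, hm.trans (Nat.lt_succ_self k), h⟩

/-- The recursion on stages: an argument decided in `v_{k+1}` is justified in every later `v_n`
relative to any set of arguments undecided in `v_k`. -/
lemma sjrel_of_stage {A : Type*} [Fintype A] [DecidableEq A] (D : ADF A)
    (vseq : ℕ → A → TV) (h0 : vseq 0 = trivialInterp A)
    (hstep : ∀ i : ℕ, vseq (i + 1) = Gamma D (vseq i)) (n k : ℕ) (hk : k + 1 ≤ n)
    (a : A) (E : Set A) (ha : vseq (k + 1) a ≠ TV.u) (hE : ∀ e ∈ E, vseq k e = TV.u) :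
    SJrel D (vseq n) Set.univ E a := by
  induction k using Nat.strong_induction_on generalizing a E with
  | _ k ih =>
    have hmono : ∀ {i j : ℕ}, i ≤ j → ILE (vseq i) (vseq j) :=
      fun hij => iterates_mono D vseq h0 hstep hij
    have hsub : {b | b ∈ D.parents a ∧ vseq k b ≠ TV.u} ⊆ (D.parents a ∩ Set.univ) \ E :=
      fun b hb => ⟨⟨hb.1, trivial⟩, fun he => hb.2 (hE b he)⟩
    have hrec : ∀ p ∈ {b | b ∈ D.parents a ∧ vseq k b ≠ TV.u},
        SJrel D (vseq n) Set.univ (E ∪ {p}) p := by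
      rintro p ⟨-, hp⟩
      obtain ⟨m, hmk, hm, hm'⟩ := exists_first_stage vseq h0 hp
      refine ih m hmk (by omega) p _ hm ?_
      rintro e (he | rfl)
      · exact (hmono hmk.le).eq_u (hE e he)
      · exact hm'
    have hkn : ILE (vseq k) (vseq n) := hmono (by omega)
    have hval := (hmono hk).eq_of_ne ha
    cases hv : vseq (k + 1) a with
    | u => exact absurd hv ha
    | t =>
      refine SJrel.acc E a _ (hval.trans hv) hsub ?_ hrec
      rw [hstep] at hv
      exact forced_restrict D a hkn true (irrefutable_of_gamma hv)
    | f =>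
      refine SJrel.den E a _ (hval.trans hv) hsub ?_ hrec
      rw [hstep] at hv
      exact forced_restrict D a hkn false (unsat_of_gamma hv)

/-- Every member of the sequence v_0 = v_u, v_{i+1} = Γ_D(v_i)
is a strongly admissible interpretation. -/
theorem gamma_iterates_strongly_admissible {A : Type*} [Fintype A] [DecidableEq A]
    (D : ADF A) (vseq : ℕ → A → TV) (h0 : vseq 0 = trivialInterp A)
    (hstep : ∀ i : ℕ, vseq (i + 1) = Gamma D (vseq i)) :
    ∀ i : ℕ, StronglyAdmissible D (vseq i) := by
  intro n a ha
  refine ⟨Set.univ, ?_⟩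
  obtain ⟨m, hmn, hm, hm'⟩ := exists_first_stage vseq h0 ha
  exact sjrel_of_stage D vseq h0 hstep n m hmn a {a} hm (by rintro e rfl; exact hm')
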